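/- Assume s ≥ 15 (where Q(s) = kγ). Then: (1) for every λ̄ = (λ₀,λ₁,λ₂) with all λᵢ > 0 and λ₀+λ₁+λ₂ = 1 there exist ā = (a₀,a₁,a₂) with aᵢ > 0 and c̄ = (c₀,c₁,c₂) with cᵢ > 0 such that Ψ(ω̄, λ̄, ā, c̄) ≤ 3^{1−γ} for every ω̄ = (ω₀,ω₁,ω₂) with ωᵢ ≥ 0 and ω₀+ω₁+ω₂ = 1; (2) for every ε > 0 there exists δ > 0 such that for every such λ̄ with max(|λ₁ − 1/3|, |λ₂ − 1/3|) ≥ ε, the vectors ā, c̄ > 0 can be chosen so that Ψ(ω̄, λ̄, ā, c̄) ≤ 3^{1−γ} − δ for every such ω̄. -/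

import Mathlib

/-- `q(x) = exp(x) - x - 1`. -/
noncomputable def q (x : ℝ) : ℝ := Real.exp x - x - 1

/-- `Q(x) = x·(exp(x) − 1)/(exp(x) − x − 1)`. -/
noncomputable def Qf (x : ℝ) : ℝ := x * (Real.exp x - 1) / (Real.exp x - x - 1)

/-- `r(y₀,y₁,y₂) = Σ (k choose k₀,k₁,k₂)·y₀^{k₀}·y₁^{k₁}·y₂^{k₂}`, summed over all
`k₀+k₁+k₂ = k` with `k₁ ≡ k₂ (mod 3)`. -/
noncomputable def r (k : ℕ) (y₀ y₁ y₂ : ℝ) : ℝ :=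
  ∑ t ∈ (Finset.Nat.antidiagonalTuple 3 k).filter (fun t => t 1 % 3 = t 2 % 3),
    (Nat.multinomial Finset.univ t : ℝ) * y₀ ^ t 0 * y₁ ^ t 1 * y₂ ^ t 2

/-- `Ψ(ω̄,λ̄,x̄,ȳ)`; real powers are `rpow`, so the convention `0^0 = 1` holds. -/
noncomputable def Psi (k : ℕ) (γ s : ℝ) (ω lam x y : Fin 3 → ℝ) : ℝ :=
  (∏ i, (q (x i) / (ω i * q s)) ^ (ω i)) *
  ((∏ i, (lam i * s / (x i * y i)) ^ (lam i)) ^ ((k:ℝ) * γ)) *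
  (r k (y 0) (y 1) (y 2)) ^ γ

/-!
Write `d = kγ`. The weighted AM-GM inequality removes `ω` from `Ψ`, and a cube root of unity filter
bounds `r` on the simplex by `(1 + 2 R ^ (k / 2)) / 3`, where `R` is the squared modulus of the
nontrivial Fourier coefficients of `y` on `ℤ/3ℤ`. Both parts then follow once `x = s • b` and
`y = c` are found with `freeEnergy s lam b c ≤ 0`, the bound for the exponent `γ = 1`: passing to
`γ < 1` gains the factor `(1 + 2 R ^ (d / 2)) ^ (γ - 1)`.

The function `log ∘ q` is concave with derivative `d / s` at `s`, so that `b = 1 - x / d` gives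
`q (s b) / q s ≤ exp (-x)`. If `lam` is not close to a vertex of the simplex, take `c = lam` and `x`
proportional to `1 / 3 - lam`; Hoeffding's lemma bounds the resulting free energy. Near a vertex,
with `T = d (1 - lam 0)`, take `c = lam` and `x = (0, 3, 3)` when `T ≥ 1 / 4`, and `b = (1, √T, √T)`
when `T ≤ 1 / 4`.
-/

open Real

section RealInequalities

variable {ι : Type*} [Fintype ι]

lemma log_mean_exp_le_of_mem_Icc [Nonempty ι] {z : ι → ℝ} {a b : ℝ}
    (hz : ∀ i, z i ∈ Set.Icc a b) :
    log ((∑ i, exp (z i)) / Fintype.card ι) ≤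
      (∑ i, z i) / Fintype.card ι + (b - a) ^ 2 / 8 := by
  let _ : MeasurableSpace ι := ⊤
  let μ := (PMF.uniformOfFintype ι).toMeasure
  have integral_eq (f : ι → ℝ) : ∫ i, f i ∂μ = (∑ i, f i) / Fintype.card ι := by
    simp [μ, PMF.integral_eq_sum, Finset.mul_sum, div_eq_inv_mul]
  have hoeffding := (ProbabilityTheory.hasSubgaussianMGF_of_mem_Icc (μ := μ) (X := z)
    (measurable_of_finite z).aemeasurable (.of_forall hz)).cgf_le 1
  have hsum : 0 < ∑ i, exp (z i) := Finset.sum_pos (fun i _ ↦ exp_pos _) Finset.univ_nonempty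
  have hmean : ∑ i, exp (1 * (z i - (∑ i, z i) / Fintype.card ι)) =
      (∑ i, exp (z i)) / exp ((∑ i, z i) / Fintype.card ι) := by
    simp only [one_mul, exp_sub, Finset.sum_div]
  rw [ProbabilityTheory.cgf, ProbabilityTheory.mgf, integral_eq, integral_eq, hmean,
    div_right_comm, log_div (by positivity) (by positivity), log_exp] at hoeffding
  have hvariance : (((‖b - a‖₊ / 2) ^ 2 : NNReal) : ℝ) = (b - a) ^ 2 / 4 := by
    push_cast
    rw [norm_eq_abs, div_pow, sq_abs]
    norm_num
  rw [hvariance] at hoeffding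
  linarith

lemma log_mean_exp_le_mean_add_sum_sq [Nonempty ι] (z : ι → ℝ) :
    log ((∑ i, exp (z i)) / Fintype.card ι) ≤
      (∑ i, z i) / Fintype.card ι + (∑ i, z i ^ 2) / 4 := by
  classical
  obtain ⟨imin, hmin⟩ := Finite.exists_min z
  obtain ⟨imax, hmax⟩ := Finite.exists_max z
  have hrange : (z imax - z imin) ^ 2 ≤ 2 * ∑ i, z i ^ 2 := by
    rcases eq_or_ne imax imin with h | h
    · rw [h, sub_self, zero_pow two_ne_zero]
      positivity
    · have hpair : z imax ^ 2 + z imin ^ 2 ≤ ∑ i, z i ^ 2 := by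
        rw [← Finset.sum_pair h (f := fun i ↦ z i ^ 2)]
        exact Finset.sum_le_univ_sum_of_nonneg fun i ↦ sq_nonneg _
      nlinarith [sq_nonneg (z imax + z imin)]
  linarith [log_mean_exp_le_of_mem_Icc fun i ↦ ⟨hmin i, hmax i⟩]

lemma prod_div_rpow_le_sum {w z : ι → ℝ} (hw : w ∈ stdSimplex ℝ ι) (hz : ∀ i, 0 ≤ z i) :
    ∏ i, (z i / w i) ^ w i ≤ ∑ i, z i := by
  refine (geom_mean_le_arith_mean_weighted Finset.univ w (fun i ↦ z i / w i)
    (fun i _ ↦ hw.1 i) hw.2 (fun i _ ↦ div_nonneg (hz i) (hw.1 i))).trans ?_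
  gcongr with i
  rcases (hw.1 i).eq_or_lt with h | h
  · simpa [← h] using hz i
  · rw [mul_div_cancel₀ _ h.ne']

lemma prod_rpow_eq_exp_sum_mul_log {z : ι → ℝ} (hz : ∀ i, 0 < z i)
    (w : ι → ℝ) : ∏ i, z i ^ w i = exp (∑ i, w i * log (z i)) := by
  rw [exp_sum]
  exact Finset.prod_congr rfl fun i _ ↦ by rw [rpow_def_of_pos (hz i), mul_comm]

lemma log_one_add_two_mul_div_three_le {u X : ℝ} (hu : 0 ≤ u) (hX : 0 ≤ X) (huX : u ≤ exp (-X)) :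
    log ((1 + 2 * u) / 3) ≤ -(2 / 3) * X + X ^ 2 / 8 := by
  have hoeffding := log_mean_exp_le_of_mem_Icc (z := ![0, -X, -X]) (a := -X) (b := 0) fun i ↦ by
    fin_cases i <;> simp [hX]
  have hmono : log ((1 + 2 * u) / 3) ≤ log ((1 + exp (-X) + exp (-X)) / 3) := by
    apply log_le_log (by positivity)
    linarith
  simp only [Fin.sum_univ_three, Matrix.cons_val_zero, Matrix.cons_val_one, Matrix.cons_val,
    exp_zero, Fintype.card_fin] at hoeffding
  linarith

lemma neg_log_one_sub_le {z m : ℝ} (hz : z ≤ m) (hm : m < 1) :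
    -log (1 - z) ≤ z + z ^ 2 / (1 - m) := by
  have hz1 : 0 < 1 - z := by linarith
  have hlog := one_sub_inv_le_log_of_pos hz1
  have hinv : (1 - z)⁻¹ - 1 = z + z ^ 2 / (1 - z) := by
    field_simp
    ring
  have hdiv : z ^ 2 / (1 - z) ≤ z ^ 2 / (1 - m) := by gcongr
  linarith

end RealInequalities

section TruncatedExponential

lemma q_pos {x : ℝ} (hx : 0 < x) : 0 < q x := by
  have := add_one_lt_exp hx.ne'
  unfold q
  linarith

lemma Qf_eq {x : ℝ} (hx : 0 < x) : Qf x = x * (1 + x / q x) := by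
  have hq := (q_pos hx).ne'
  unfold Qf
  rw [← q, eq_comm]
  field_simp
  unfold q
  ring

lemma le_Qf {x : ℝ} (hx : 0 < x) : x ≤ Qf x := by
  have := div_pos hx (q_pos hx)
  rw [Qf_eq hx]
  nlinarith

lemma antitoneOn_div_q : AntitoneOn (fun x ↦ x / q x) (Set.Ioi 0) := by
  intro x hx y hy hxy
  rw [Set.mem_Ioi] at hx hy
  have hslope := convexOn_exp.secant_mono (Set.mem_univ 0) (Set.mem_univ x) (Set.mem_univ y)
    hx.ne' hy.ne' hxy
  have hq_div {u : ℝ} (hu : 0 < u) : q u / u = (exp u - exp 0) / (u - 0) - 1 := by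
    rw [q, exp_zero, sub_zero]
    field_simp
    ring
  have hmono : q x / x ≤ q y / y := by
    rw [hq_div hx, hq_div hy]
    linarith
  simpa only [inv_div] using inv_anti₀ (div_pos (q_pos hx) hx) hmono

lemma hasDerivAt_log_q {x : ℝ} (hx : 0 < x) :
    HasDerivAt (fun x ↦ log (q x)) (1 + x / q x) x := by
  have hq := q_pos hx
  have hderiv : HasDerivAt q (exp x - 1) x :=
    ((hasDerivAt_exp x).sub (hasDerivAt_id x)).sub_const 1
  refine (hderiv.log hq.ne').congr_deriv ?_
  field_simp
  unfold q
  ring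

lemma concaveOn_log_q : ConcaveOn ℝ (Set.Ioi 0) fun x ↦ log (q x) := by
  refine AntitoneOn.concaveOn_of_deriv (convex_Ioi 0)
    (fun x hx ↦ (hasDerivAt_log_q hx).continuousAt.continuousWithinAt) ?_ ?_ <;>
    rw [interior_Ioi]
  · exact fun x hx ↦ (hasDerivAt_log_q hx).differentiableAt.differentiableWithinAt
  · intro x hx y hy hxy
    rw [(hasDerivAt_log_q hx).deriv, (hasDerivAt_log_q hy).deriv]
    exact add_le_add_right (antitoneOn_div_q hx hy hxy) 1

lemma log_q_le_tangent {x y : ℝ} (hx : 0 < x) (hy : 0 < y) :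
    log (q y) ≤ log (q x) + (1 + x / q x) * (y - x) := by
  rcases lt_trichotomy x y with h | rfl | h
  · have := concaveOn_log_q.slope_le_of_hasDerivAt hx hy h (hasDerivAt_log_q hx)
    rw [slope_def_field, div_le_iff₀ (by linarith)] at this
    linarith
  · simp
  · have := concaveOn_log_q.le_slope_of_hasDerivAt hy hx h (hasDerivAt_log_q hx)
    rw [slope_def_field, le_div_iff₀ (by linarith)] at this
    linarith

lemma q_mul_div_q_le_exp {s b : ℝ} (hs : 0 < s) (hb : 0 < b) :
    q (s * b) / q s ≤ exp (Qf s * (b - 1)) := by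
  have hsb := q_pos (mul_pos hs hb)
  have htangent := log_q_le_tangent hs (mul_pos hs hb)
  rw [← log_le_iff_le_exp (div_pos hsb (q_pos hs)), log_div hsb.ne' (q_pos hs).ne', Qf_eq hs]
  linarith

lemma q_le_sq_mul_exp {x : ℝ} (hx : 0 ≤ x) : q x ≤ x ^ 2 * exp x := by
  have h : exp x - 1 ≤ x * exp x := by
    have := mul_le_mul_of_nonneg_left (one_sub_le_exp_neg x) (exp_pos x).le
    rw [← exp_add, add_neg_cancel, exp_zero] at this
    linarith
  unfold q
  nlinarith

lemma six_mul_sq_le_exp_half {s : ℝ} (hs : 15 ≤ s) : 6 * s ^ 2 ≤ exp (s / 2) := by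
  have hexp_one : 2.71 ≤ exp 1 := by linarith [exp_one_gt_d9]
  have hexp15 : 1350 ^ 2 ≤ exp (15 / 2) ^ 2 := by
    rw [← exp_nat_mul, show ((2 : ℕ) : ℝ) * (15 / 2) = (15 : ℕ) * 1 by norm_num, exp_nat_mul]
    exact le_trans (by norm_num) (pow_le_pow_left₀ (by norm_num) hexp_one 15)
  have hscale : (s / 15) ^ 2 ≤ exp ((s - 15) / 2) := by
    have hle : s / 15 ≤ exp ((s - 15) / 4) := by linarith [add_one_le_exp ((s - 15) / 4)]
    calc (s / 15) ^ 2 ≤ exp ((s - 15) / 4) ^ 2 := by gcongr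
      _ = exp ((s - 15) / 2) := by rw [← exp_nat_mul]; ring_nf
  calc 6 * s ^ 2 = 1350 * (s / 15) ^ 2 := by ring
    _ ≤ exp (15 / 2) * exp ((s - 15) / 2) := by
      gcongr
      exact le_of_sq_le_sq hexp15 (exp_pos _).le
    _ = exp (s / 2) := by rw [← exp_add]; ring_nf

lemma q_mul_div_q_le_sq {s b : ℝ} (hs : 15 ≤ s) (hb0 : 0 ≤ b) (hb : b ≤ 1 / 2) :
    q (s * b) / q s ≤ b ^ 2 / 4 := by
  have hpoly := six_mul_sq_le_exp_half hs
  have hexp : exp s = exp (s / 2) ^ 2 := by rw [← exp_nat_mul]; ring_nf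
  have hq : 3 / 4 * exp s ≤ q s := by
    have : exp (s / 2) ≤ exp s := exp_le_exp.2 (by linarith)
    unfold q
    nlinarith
  rw [div_le_iff₀ (q_pos (by linarith))]
  calc q (s * b) ≤ (s * b) ^ 2 * exp (s * b) := q_le_sq_mul_exp (by positivity)
    _ ≤ (s * b) ^ 2 * exp (s / 2) := by gcongr; nlinarith
    _ = b ^ 2 / 4 * (4 * s ^ 2 * exp (s / 2)) := by ring
    _ ≤ b ^ 2 / 4 * q s := by
      gcongr
      nlinarith [exp_pos (s / 2)]

end TruncatedExponential

section Fourier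

/-- The common value of `‖∑ j, ζ ^ j * y j‖ ^ 2` for the two primitive cube roots of unity `ζ`: the
squared modulus of the nontrivial Fourier coefficients of `y` on `ℤ/3ℤ`. It is written in a form
that is visibly invariant under permutations of the coordinates. -/
noncomputable def fourierNormSq (y : Fin 3 → ℝ) : ℝ := (3 * ∑ i, y i ^ 2 - (∑ i, y i) ^ 2) / 2

lemma fourierNormSq_comp_perm (y : Fin 3 → ℝ) (σ : Equiv.Perm (Fin 3)) :
    fourierNormSq (y ∘ σ) = fourierNormSq y := by
  simp only [fourierNormSq, Function.comp_apply, Equiv.sum_comp σ y,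
    Equiv.sum_comp σ fun i ↦ y i ^ 2]

lemma fourierNormSq_nonneg (y : Fin 3 → ℝ) : 0 ≤ fourierNormSq y := by
  simp only [fourierNormSq, Fin.sum_univ_three]
  nlinarith [sq_nonneg (y 0 - y 1), sq_nonneg (y 0 - y 2), sq_nonneg (y 1 - y 2)]

lemma fourierNormSq_eq_sum_sq_sub {y : Fin 3 → ℝ} (hy : ∑ i, y i = 1) :
    fourierNormSq y = 3 / 2 * ∑ i, (y i - 1 / 3) ^ 2 := by
  rw [fourierNormSq, hy]
  rw [Fin.sum_univ_three] at hy
  simp only [Fin.sum_univ_three]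
  linear_combination hy

lemma fourierNormSq_eq_one_sub {y : Fin 3 → ℝ} (hy : ∑ i, y i = 1) :
    fourierNormSq y = 1 - 3 * (y 0 * (1 - y 0) + y 1 * y 2) := by
  rw [Fin.sum_univ_three] at hy
  have hy0 : y 0 = 1 - y 1 - y 2 := by linarith
  simp only [fourierNormSq, Fin.sum_univ_three, hy0]
  ring

lemma fourierNormSq_le_one_sub {y : Fin 3 → ℝ} (hy : y ∈ stdSimplex ℝ (Fin 3)) :
    fourierNormSq y ≤ 1 - 3 * (y 0 * (1 - y 0)) := by
  linarith [fourierNormSq_eq_one_sub hy.2, mul_nonneg (hy.1 1) (hy.1 2)]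

lemma one_sub_le_fourierNormSq {y : Fin 3 → ℝ} (hy : y ∈ stdSimplex ℝ (Fin 3)) :
    1 - 3 * (1 - y 0) ≤ fourierNormSq y := by
  have hsum := hy.2
  rw [Fin.sum_univ_three] at hsum
  have hy12 : 1 - y 0 = y 1 + y 2 := by linarith
  have hy0 : y 0 = 1 - y 1 - y 2 := by linarith
  rw [fourierNormSq_eq_one_sub hy.2, hy12, hy0]
  nlinarith [sq_nonneg (y 1), sq_nonneg (y 2), mul_nonneg (hy.1 1) (hy.1 2)]

lemma fourierNormSq_le_one {y : Fin 3 → ℝ} (hy : y ∈ stdSimplex ℝ (Fin 3)) :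
    fourierNormSq y ≤ 1 := by
  have hy0 : y 0 ≤ 1 := hy.2 ▸ Finset.single_le_sum (fun i _ ↦ hy.1 i) (Finset.mem_univ 0)
  nlinarith [fourierNormSq_le_one_sub hy, hy.1 0]

lemma fourierNormSq_rpow_half_le_exp {y : Fin 3 → ℝ} (hy : y ∈ stdSimplex ℝ (Fin 3)) {d : ℝ}
    (hd : 0 ≤ d) :
    fourierNormSq y ^ (d / 2) ≤ exp (-(3 / 2 * d * (y 0 * (1 - y 0)))) := by
  have hle : fourierNormSq y ≤ exp (-(3 * (y 0 * (1 - y 0)))) :=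
    (fourierNormSq_le_one_sub hy).trans (one_sub_le_exp_neg _)
  calc fourierNormSq y ^ (d / 2) ≤ exp (-(3 * (y 0 * (1 - y 0)))) ^ (d / 2) :=
        rpow_le_rpow (fourierNormSq_nonneg y) hle (by positivity)
    _ = exp (-(3 / 2 * d * (y 0 * (1 - y 0)))) := by rw [← exp_mul]; ring_nf

lemma exists_five_sixths_lt_of_lt_fourierNormSq {y : Fin 3 → ℝ} (hy : y ∈ stdSimplex ℝ (Fin 3))
    (h : 3 / 4 < fourierNormSq y) : ∃ i, 5 / 6 < y i := by
  by_contra! hle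
  have hsq : ∑ i, y i ^ 2 ≤ ∑ i, 5 / 6 * y i :=
    Finset.sum_le_sum fun i _ ↦ by nlinarith [hle i, hy.1 i]
  rw [← Finset.mul_sum, hy.2] at hsq
  rw [fourierNormSq, hy.2] at h
  linarith

variable {ζ : ℂ}

lemma one_add_pow_add_sq_pow (hζ : IsPrimitiveRoot ζ 3) (n : ℕ) :
    1 + ζ ^ n + (ζ ^ 2) ^ n = if 3 ∣ n then 3 else 0 := by
  rw [← pow_mul, mul_comm 2 n, pow_mul]
  split_ifs with h
  · rw [(hζ.pow_eq_one_iff_dvd n).2 h]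
    norm_num
  · have hn : IsPrimitiveRoot (ζ ^ n) 3 :=
      hζ.pow_of_coprime n ((Nat.Prime.coprime_iff_not_dvd Nat.prime_three).2 h).symm
    simpa [Finset.sum_range_succ] using hn.geom_sum_eq_zero (by norm_num)

lemma add_mul_add_sq_mul_pow (y : Fin 3 → ℝ) (z : ℂ) (k : ℕ) :
    (y 0 + z * y 1 + z ^ 2 * y 2) ^ k =
      ∑ t ∈ Finset.Nat.antidiagonalTuple 3 k,
        ((Nat.multinomial Finset.univ t : ℝ) * y 0 ^ t 0 * y 1 ^ t 1 * y 2 ^ t 2 : ℝ) *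
          z ^ (t 1 + 2 * t 2) := by
  have hmultinomial := Finset.sum_pow_eq_sum_piAntidiag (Finset.univ : Finset (Fin 3))
    ![(y 0 : ℂ), z * y 1, z ^ 2 * y 2] k
  simp only [Finset.piAntidiag_univ_fin_eq_antidiagonalTuple, Fin.sum_univ_three,
    Fin.prod_univ_three, Matrix.cons_val_zero, Matrix.cons_val_one, Matrix.cons_val]
    at hmultinomial
  rw [hmultinomial]
  refine Finset.sum_congr rfl fun t _ ↦ ?_
  push_cast
  ring

lemma three_mul_r_eq_sum_pow (hζ : IsPrimitiveRoot ζ 3) (k : ℕ) (y : Fin 3 → ℝ) :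
    ((3 * r k (y 0) (y 1) (y 2) : ℝ) : ℂ) = (y 0 + y 1 + y 2) ^ k +
      (y 0 + ζ * y 1 + ζ ^ 2 * y 2) ^ k + (y 0 + ζ ^ 2 * y 1 + (ζ ^ 2) ^ 2 * y 2) ^ k := by
  have hone : ((y 0 : ℂ) + y 1 + y 2) ^ k = (y 0 + 1 * y 1 + 1 ^ 2 * y 2) ^ k := by ring
  have hdvd (t : Fin 3 → ℕ) : t 1 % 3 = t 2 % 3 ↔ 3 ∣ t 1 + 2 * t 2 := by omega
  rw [hone, add_mul_add_sq_mul_pow, add_mul_add_sq_mul_pow, add_mul_add_sq_mul_pow,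
    ← Finset.sum_add_distrib, ← Finset.sum_add_distrib]
  simp only [← mul_add, one_pow, one_add_pow_add_sq_pow hζ]
  rw [r, Finset.sum_filter]
  push_cast
  rw [Finset.mul_sum]
  refine Finset.sum_congr rfl fun t _ ↦ ?_
  simp only [hdvd, mul_ite, mul_zero]
  split_ifs <;> push_cast <;> ring

lemma sq_norm_add_mul_add_sq_mul (hζ : IsPrimitiveRoot ζ 3) (y : Fin 3 → ℝ) :
    ‖y 0 + ζ * y 1 + ζ ^ 2 * y 2‖ ^ 2 = fourierNormSq y := by
  have hcube : ζ ^ 3 = 1 := hζ.pow_eq_one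
  have hgeom : 1 + ζ + ζ ^ 2 = 0 := by
    simpa [Finset.sum_range_succ] using hζ.geom_sum_eq_zero (by norm_num)
  have hconj : (starRingEnd ℂ) ζ = ζ ^ 2 := by
    rw [← Complex.inv_eq_conj (hζ.norm'_eq_one (by norm_num))]
    exact inv_eq_of_mul_eq_one_right (by linear_combination hcube)
  rw [← Complex.ofReal_inj, Complex.ofReal_pow, ← Complex.mul_conj']
  simp only [map_add, map_mul, map_pow, Complex.conj_ofReal, hconj, fourierNormSq,
    Fin.sum_univ_three]
  push_cast
  linear_combination
    (y 1 ^ 2 + (ζ + ζ ^ 2) * (y 1 * y 2) + y 0 * y 2 * ζ + y 2 ^ 2 * (ζ ^ 3 + 1)) * hcube +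
    (y 0 * y 1 + y 0 * y 2 + y 1 * y 2) * hgeom

lemma r_le_of_sum_eq_one (k : ℕ) {y : Fin 3 → ℝ} (hy : ∑ i, y i = 1) :
    r k (y 0) (y 1) (y 2) ≤ (1 + 2 * fourierNormSq y ^ ((k : ℝ) / 2)) / 3 := by
  obtain ⟨ζ, hζ⟩ : ∃ ζ : ℂ, IsPrimitiveRoot ζ 3 :=
    ⟨_, Complex.isPrimitiveRoot_exp 3 (by norm_num)⟩
  have hsum : ((y 0 : ℂ) + y 1 + y 2) = 1 := by
    rw [Fin.sum_univ_three] at hy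
    exact_mod_cast hy
  have hnorm {ξ : ℂ} (hξ : IsPrimitiveRoot ξ 3) :
      ‖(y 0 + ξ * y 1 + ξ ^ 2 * y 2) ^ k‖ = fourierNormSq y ^ ((k : ℝ) / 2) := by
    rw [norm_pow, ← sq_norm_add_mul_add_sq_mul hξ, ← rpow_natCast, ← rpow_natCast,
      ← rpow_mul (norm_nonneg _)]
    push_cast
    congr 1
    ring
  have htriangle : 3 * r k (y 0) (y 1) (y 2) ≤ 1 + fourierNormSq y ^ ((k : ℝ) / 2) +
      fourierNormSq y ^ ((k : ℝ) / 2) :=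
    calc 3 * r k (y 0) (y 1) (y 2) ≤ ‖((3 * r k (y 0) (y 1) (y 2) : ℝ) : ℂ)‖ :=
          (le_abs_self _).trans_eq (Complex.norm_real _).symm
      _ ≤ _ := by
        rw [three_mul_r_eq_sum_pow hζ, hsum, one_pow]
        refine norm_add₃_le.trans_eq ?_
        rw [norm_one, hnorm hζ, hnorm (hζ.pow_of_coprime 2 (by norm_num))]
  linarith

lemma r_le_of_mem_stdSimplex {k : ℕ} {y : Fin 3 → ℝ} (hy : y ∈ stdSimplex ℝ (Fin 3)) {d : ℝ}
    (hd0 : 0 ≤ d) (hd : d ≤ k) :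
    r k (y 0) (y 1) (y 2) ≤ (1 + 2 * fourierNormSq y ^ (d / 2)) / 3 := by
  have hpow : fourierNormSq y ^ ((k : ℝ) / 2) ≤ fourierNormSq y ^ (d / 2) :=
    rpow_le_rpow_of_exponent_ge' (fourierNormSq_nonneg y) (fourierNormSq_le_one hy)
      (by positivity) (by linarith)
  linarith [r_le_of_sum_eq_one k hy.2]

lemma r_nonneg (k : ℕ) {y : Fin 3 → ℝ} (hy : ∀ i, 0 ≤ y i) : 0 ≤ r k (y 0) (y 1) (y 2) := by
  have := hy 0
  have := hy 1
  have := hy 2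
  exact Finset.sum_nonneg fun t _ ↦ by positivity

end Fourier

section Certificates

/-- The logarithm of an upper bound for `Ψ` at `x = s • b` and `y = c`, uniform in `ω` and at
`γ = 1`, where the target value `3 ^ (1 - γ)` is `1`. The exponent `kγ` is written as `Qf s`. -/
noncomputable def freeEnergy (s : ℝ) (lam b c : Fin 3 → ℝ) : ℝ :=
  log ((∑ i, q (s * b i) / q s) / 3) + Qf s * ∑ i, lam i * log (lam i / (b i * c i)) +
    log (1 + 2 * fourierNormSq c ^ (Qf s / 2))

/-- The pair `(b, c)` witnesses the bounds on `Ψ` for the given `lam`: `fourierNormSq_le` keeps `c`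
away from the uniform distribution when `lam` is, which is the source of the strict gain. -/
structure IsCertificate (s : ℝ) (lam b c : Fin 3 → ℝ) : Prop where
  pos_left : ∀ i, 0 < b i
  pos_right : ∀ i, 0 < c i
  sum_eq_one : ∑ i, c i = 1
  fourierNormSq_le : min (fourierNormSq lam) (1 / 2) ≤ fourierNormSq c
  freeEnergy_nonpos : freeEnergy s lam b c ≤ 0

lemma freeEnergy_comp_perm (s : ℝ) (lam b c : Fin 3 → ℝ) (σ : Equiv.Perm (Fin 3)) :
    freeEnergy s (lam ∘ σ) (b ∘ σ) (c ∘ σ) = freeEnergy s lam b c := by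
  simp only [freeEnergy, Function.comp_apply, fourierNormSq_comp_perm,
    Equiv.sum_comp σ fun i ↦ q (s * b i) / q s,
    Equiv.sum_comp σ fun i ↦ lam i * log (lam i / (b i * c i))]

lemma IsCertificate.comp_perm {s : ℝ} {lam b c : Fin 3 → ℝ} (h : IsCertificate s lam b c)
    (σ : Equiv.Perm (Fin 3)) : IsCertificate s (lam ∘ σ) (b ∘ σ) (c ∘ σ) where
  pos_left i := h.pos_left (σ i)
  pos_right i := h.pos_right (σ i)
  sum_eq_one := (Equiv.sum_comp σ c).trans h.sum_eq_one
  fourierNormSq_le := by simpa only [fourierNormSq_comp_perm] using h.fourierNormSq_le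
  freeEnergy_nonpos := by simpa only [freeEnergy_comp_perm] using h.freeEnergy_nonpos

variable {s : ℝ} {lam : Fin 3 → ℝ}

lemma one_sub_div_Qf_pos (hs : 15 ≤ s) {x : ℝ} (hx : x ≤ 3) : 0 < 1 - x / Qf s := by
  have hd := hs.trans (le_Qf (by linarith))
  rw [sub_pos, div_lt_one (by linarith)]
  linarith

lemma neg_Qf_mul_log_one_sub_div_le (hs : 15 ≤ s) {x : ℝ} (hx : x ≤ 3) :
    -(Qf s * log (1 - x / Qf s)) ≤ x + x ^ 2 / 12 := by
  have hd := hs.trans (le_Qf (by linarith))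
  have hxd : x / Qf s ≤ 1 / 5 := by
    rw [div_le_iff₀ (by linarith)]
    linarith
  calc -(Qf s * log (1 - x / Qf s)) = Qf s * -log (1 - x / Qf s) := by ring
    _ ≤ Qf s * (x / Qf s + (x / Qf s) ^ 2 / (1 - 1 / 5)) := by
      gcongr
      exact neg_log_one_sub_le hxd (by norm_num)
    _ = x + 5 / 4 * x ^ 2 / Qf s := by
      field_simp
      ring
    _ ≤ x + 5 / 4 * x ^ 2 / 15 := by gcongr
    _ = x + x ^ 2 / 12 := by ring

lemma freeEnergy_one_sub_div_le (hs : 15 ≤ s) (hlam : ∀ i, 0 < lam i) {x : Fin 3 → ℝ}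
    (hx : ∀ i, x i ≤ 3) :
    freeEnergy s lam (fun i ↦ 1 - x i / Qf s) lam ≤
      log ((∑ i, exp (-x i)) / 3) + ∑ i, lam i * (x i + x i ^ 2 / 12) +
        log (1 + 2 * fourierNormSq lam ^ (Qf s / 2)) := by
  have hs0 : 0 < s := by linarith
  have hd := hs0.trans_le (le_Qf hs0)
  have hb (i : Fin 3) := one_sub_div_Qf_pos hs (hx i)
  have hq (i : Fin 3) : 0 < q (s * (1 - x i / Qf s)) / q s :=
    div_pos (q_pos (mul_pos hs0 (hb i))) (q_pos hs0)
  unfold freeEnergy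
  gcongr ?_ + ?_ + _
  · have hpos := Finset.sum_pos (fun i _ ↦ hq i) Finset.univ_nonempty
    gcongr with i
    refine (q_mul_div_q_le_exp hs0 (hb i)).trans_eq ?_
    congr 1
    field_simp
    ring
  · rw [Finset.mul_sum]
    refine Finset.sum_le_sum fun i _ ↦ ?_
    rw [div_mul_cancel_right₀ (hlam i).ne', log_inv]
    linarith [mul_le_mul_of_nonneg_left (neg_Qf_mul_log_one_sub_div_le hs (hx i)) (hlam i).le]

lemma log_one_add_two_mul_rpow_le {R d : ℝ} (hR0 : 0 ≤ R) (hR : R ≤ 3 / 4) (hd : 14 ≤ d) :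
    log (1 + 2 * R ^ (d / 2)) ≤ R / 2 := by
  have hpow : R ^ (d / 2) ≤ R / 4 :=
    calc R ^ (d / 2) ≤ R ^ ((7 : ℕ) : ℝ) :=
          rpow_le_rpow_of_exponent_ge' hR0 (by linarith) (by norm_num) (by norm_num; linarith)
      _ = R ^ 6 * R := by rw [rpow_natCast]; ring
      _ ≤ (3 / 4) ^ 6 * R := by gcongr
      _ ≤ R / 4 := by linarith
  linarith [log_le_sub_one_of_pos (show 0 < 1 + 2 * R ^ (d / 2) by positivity)]

lemma exists_isCertificate_of_fourierNormSq_le (hs : 15 ≤ s) (hlam : ∀ i, 0 < lam i)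
    (hsum : ∑ i, lam i = 1) (hR : fourierNormSq lam ≤ 3 / 4) :
    ∃ b c, IsCertificate s lam b c := by
  have hd := hs.trans (le_Qf (by linarith))
  let x (i : Fin 3) : ℝ := -(3 / 2 * (lam i - 1 / 3))
  have hx (i : Fin 3) : x i ≤ 3 := by simp only [x]; linarith [hlam i]
  have hlam_le (i : Fin 3) : lam i ≤ 1 :=
    hsum ▸ Finset.single_le_sum (fun j _ ↦ (hlam j).le) (Finset.mem_univ i)
  have hvariance := fourierNormSq_eq_sum_sq_sub hsum
  have hmean : log ((∑ i, exp (-x i)) / 3) ≤ 3 / 8 * fourierNormSq lam := by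
    have h := log_mean_exp_le_mean_add_sum_sq fun i ↦ -x i
    simp only [Fintype.card_fin, Nat.cast_ofNat] at h
    refine h.trans_eq ?_
    rw [hvariance]
    simp only [x, Fin.sum_univ_three] at hsum ⊢
    linear_combination (1 / 2) * hsum
  have htilt : ∑ i, lam i * (x i + x i ^ 2 / 12) ≤ -(7 / 8) * fourierNormSq lam :=
    calc ∑ i, lam i * (x i + x i ^ 2 / 12) ≤ ∑ i, (lam i * x i + x i ^ 2 / 12) := by
          gcongr with i
          nlinarith [hlam_le i, sq_nonneg (x i)]
      _ = -(7 / 8) * fourierNormSq lam := by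
        rw [hvariance]
        simp only [x, Fin.sum_univ_three] at hsum ⊢
        linear_combination -(1 / 2) * hsum
  refine ⟨fun i ↦ 1 - x i / Qf s, lam, fun i ↦ one_sub_div_Qf_pos hs (hx i), hlam, hsum,
    min_le_left _ _, ?_⟩
  linarith [freeEnergy_one_sub_div_le hs hlam hx,
    log_one_add_two_mul_rpow_le (fourierNormSq_nonneg lam) hR (by linarith : 14 ≤ Qf s)]

lemma exp_neg_three_le : exp (-3) ≤ 1 / 20 := by
  have hexp : 20 ≤ exp 3 := by
    rw [← mul_one (3 : ℝ), ← Nat.cast_ofNat (n := 3), exp_nat_mul]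
    exact le_trans (by norm_num) (pow_le_pow_left₀ (by norm_num) exp_one_gt_d9.le 3)
  rw [exp_neg, inv_eq_one_div]
  gcongr

lemma isCertificate_of_quarter_le (hs : 15 ≤ s) (hlam : ∀ i, 0 < lam i) (hsum : ∑ i, lam i = 1)
    (hlam0 : 5 / 6 ≤ lam 0) (hT : 1 / 4 ≤ Qf s * (1 - lam 0)) :
    IsCertificate s lam (fun i ↦ 1 - ![0, 3, 3] i / Qf s) lam := by
  have hx (i : Fin 3) : (![0, 3, 3] : Fin 3 → ℝ) i ≤ 3 := by fin_cases i <;> simp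
  refine ⟨fun i ↦ one_sub_div_Qf_pos hs (hx i), hlam, hsum, min_le_left _ _, ?_⟩
  have hd := hs.trans (le_Qf (by linarith))
  set u := fourierNormSq lam ^ (Qf s / 2)
  set T := Qf s * (1 - lam 0)
  have hu0 : 0 ≤ u := rpow_nonneg (fourierNormSq_nonneg lam) _
  have hlog_three : log ((1 + 2 * u) / 3) = log (1 + 2 * u) - log 3 :=
    log_div (by positivity) (by norm_num)
  have hexp : log ((1 + exp (-3) + exp (-3)) / 3) ≤ 1 / 10 - log 3 := by
    rw [log_div (by positivity) (by norm_num)]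
    linarith [exp_neg_three_le,
      log_le_sub_one_of_pos (show 0 < 1 + exp (-3) + exp (-3) by positivity)]
  have hu {X : ℝ} (hX : X ≤ 5 / 4 * T) : u ≤ exp (-X) := by
    refine (fourierNormSq_rpow_half_le_exp ⟨fun i ↦ (hlam i).le, hsum⟩ (by linarith)).trans ?_
    rw [exp_le_exp]
    nlinarith
  have henergy := freeEnergy_one_sub_div_le hs hlam hx
  simp only [Fin.sum_univ_three, Matrix.cons_val_zero, Matrix.cons_val_one, Matrix.cons_val,
    neg_zero, exp_zero] at henergy hsum
  have hlinear : 15 * (1 - lam 0) ≤ T := by nlinarith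
  rcases le_total T 2 with hT2 | hT2
  · have := log_one_add_two_mul_div_three_le hu0 (by linarith) (hu le_rfl)
    nlinarith
  · have := log_one_add_two_mul_div_three_le hu0 (by norm_num) (hu (X := 5 / 2) (by linarith))
    nlinarith

/-- The choice of `c` that goes with `b = ![1, β, β]` when `lam` is close to the vertex `0` of the
simplex: `b i * c i = lam i` for `i ≠ 0`, so that only the vertex contributes to the entropy term of
`freeEnergy`. -/
noncomputable def cornerWeights (lam : Fin 3 → ℝ) (β w : ℝ) : Fin 3 → ℝ :=
  ![1 - w, lam 1 / β, lam 2 / β]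

lemma cornerWeights_pos {β w : ℝ} (hlam : ∀ i, 0 < lam i) (hβ : 0 < β) (hw : w < 1) (i : Fin 3) :
    0 < cornerWeights lam β w i := by
  fin_cases i
  · exact sub_pos.2 hw
  · exact div_pos (hlam 1) hβ
  · exact div_pos (hlam 2) hβ

lemma sum_cornerWeights {β w : ℝ} (hsum : ∑ i, lam i = 1) (hβ : β ≠ 0)
    (hlam0 : 1 - lam 0 = β * w) : ∑ i, cornerWeights lam β w i = 1 := by
  simp only [cornerWeights, Fin.sum_univ_three, Matrix.cons_val_zero, Matrix.cons_val_one,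
    Matrix.cons_val] at hsum ⊢
  field_simp
  linarith

lemma freeEnergy_cornerWeights {β : ℝ} (w : ℝ) (hs : 0 < s) (hlam : ∀ i, 0 < lam i)
    (hβ : 0 < β) :
    freeEnergy s lam ![1, β, β] (cornerWeights lam β w) =
      log ((1 + 2 * (q (s * β) / q s)) / 3) + Qf s * (lam 0 * log (lam 0 / (1 - w))) +
        log (1 + 2 * fourierNormSq (cornerWeights lam β w) ^ (Qf s / 2)) := by
  have hcancel (i : Fin 3) : lam i / (β * (lam i / β)) = 1 := by
    rw [mul_div_cancel₀ _ hβ.ne', div_self (hlam i).ne']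
  simp only [freeEnergy, cornerWeights, Fin.sum_univ_three, Matrix.cons_val_zero,
    Matrix.cons_val_one, Matrix.cons_val, mul_one, one_mul, div_self (q_pos hs).ne', hcancel,
    log_one, mul_zero, add_zero]
  ring_nf

lemma mul_log_one_sub_div_one_sub_le {d β w : ℝ} (hd : 0 ≤ d) (hdw : d * w = β) (hβ : β ≤ 1)
    (hw0 : 0 ≤ w) (hw : w ≤ 1 / 30) :
    d * ((1 - β * w) * log ((1 - β * w) / (1 - w))) ≤ β - β ^ 2 + 30 / 29 * (β * w) := by
  have hβ0 : 0 ≤ β := hdw ▸ mul_nonneg hd hw0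
  have hx : 0 < 1 - β * w := by nlinarith
  have hy : 0 < 1 - w := by linarith
  have hdiv : (1 - β) ^ 2 / (1 - w) ≤ 30 / 29 := by
    rw [div_le_iff₀ hy]
    nlinarith
  calc d * ((1 - β * w) * log ((1 - β * w) / (1 - w)))
      ≤ d * ((1 - β * w) * ((1 - β * w) / (1 - w) - 1)) := by
        gcongr
        exact log_le_sub_one_of_pos (div_pos hx hy)
    _ = β * (1 - β) + β * w * ((1 - β) ^ 2 / (1 - w)) := by
      field_simp
      linear_combination (1 - β) * (1 - β * w) * hdw
    _ ≤ β * (1 - β) + β * w * (30 / 29) := by gcongr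
    _ = β - β ^ 2 + 30 / 29 * (β * w) := by ring

lemma freeEnergy_cornerWeights_nonpos {β w : ℝ} (hs : 15 ≤ s) (hlam : ∀ i, 0 < lam i)
    (hβ0 : 0 < β) (hβ : β ≤ 1 / 2) (hdw : Qf s * w = β)
    (hlam0 : 1 - lam 0 = β * w) (hc : cornerWeights lam β w ∈ stdSimplex ℝ (Fin 3)) :
    freeEnergy s lam ![1, β, β] (cornerWeights lam β w) ≤ 0 := by
  have hs0 : 0 < s := by linarith
  have hd := hs.trans (le_Qf hs0)
  have hw0 : 0 < w := pos_of_mul_pos_right (hdw ▸ hβ0) (by linarith)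
  have hwβ : 15 * w ≤ β := by nlinarith
  have hq0 := div_pos (q_pos (mul_pos hs0 hβ0)) (q_pos hs0)
  have hmass : log (1 + 2 * (q (s * β) / q s)) ≤ β ^ 2 / 2 := by
    linarith [q_mul_div_q_le_sq hs hβ0.le hβ,
      log_le_sub_one_of_pos (by positivity : 0 < 1 + 2 * (q (s * β) / q s))]
  have hentropy := mul_log_one_sub_div_one_sub_le (by linarith) hdw (by linarith) hw0.le
    (by linarith)
  have hfourier := fourierNormSq_rpow_half_le_exp hc (by linarith : 0 ≤ Qf s)
  rw [show cornerWeights lam β w 0 = 1 - w from rfl,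
    show 3 / 2 * Qf s * ((1 - w) * (1 - (1 - w))) = 3 / 2 * β * (1 - w) by
      linear_combination 3 / 2 * (1 - w) * hdw] at hfourier
  have hR0 := rpow_nonneg (fourierNormSq_nonneg (cornerWeights lam β w)) (Qf s / 2)
  have hlog := log_one_add_two_mul_div_three_le hR0 (by nlinarith) hfourier
  rw [log_div (by positivity) (by norm_num)] at hlog
  rw [freeEnergy_cornerWeights w hs0 hlam hβ0, log_div (by positivity) (by norm_num),
    show lam 0 = 1 - β * w by linarith]
  have hβw : β * w ≤ β ^ 2 / 15 := by nlinarith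
  have hsq : (3 / 2 * β * (1 - w)) ^ 2 ≤ (3 / 2 * β) ^ 2 :=
    pow_le_pow_left₀ (by nlinarith) (by nlinarith) 2
  nlinarith

lemma isCertificate_cornerWeights {β w : ℝ} (hs : 15 ≤ s) (hlam : ∀ i, 0 < lam i)
    (hsum : ∑ i, lam i = 1) (hβ0 : 0 < β) (hβ : β ≤ 1 / 2) (hdw : Qf s * w = β)
    (hlam0 : 1 - lam 0 = β * w) : IsCertificate s lam ![1, β, β] (cornerWeights lam β w) := by
  have hd := hs.trans (le_Qf (by linarith))
  have hw0 : 0 < w := pos_of_mul_pos_right (hdw ▸ hβ0) (by linarith)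
  have hw : 15 * w ≤ 1 / 2 := by nlinarith
  have hcpos := cornerWeights_pos hlam hβ0 (by linarith : w < 1)
  have hcsum := sum_cornerWeights hsum hβ0.ne' hlam0
  have hc : cornerWeights lam β w ∈ stdSimplex ℝ (Fin 3) := ⟨fun i ↦ (hcpos i).le, hcsum⟩
  refine ⟨fun i ↦ by fin_cases i <;> simp [hβ0], hcpos, hcsum, (min_le_right _ _).trans ?_,
    freeEnergy_cornerWeights_nonpos hs hlam hβ0 hβ hdw hlam0 hc⟩
  have := one_sub_le_fourierNormSq hc
  rw [show cornerWeights lam β w 0 = 1 - w from rfl] at this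
  linarith

lemma exists_isCertificate_of_five_sixths_le (hs : 15 ≤ s) (hlam : ∀ i, 0 < lam i)
    (hsum : ∑ i, lam i = 1) (hlam0 : 5 / 6 ≤ lam 0) : ∃ b c, IsCertificate s lam b c := by
  have hd := hs.trans (le_Qf (by linarith))
  rcases le_total (1 / 4) (Qf s * (1 - lam 0)) with hT | hT
  · exact ⟨_, _, isCertificate_of_quarter_le hs hlam hsum hlam0 hT⟩
  · have hpos : 0 < Qf s * (1 - lam 0) := by
      rw [Fin.sum_univ_three] at hsum
      exact mul_pos (by linarith) (by linarith [hlam 1, hlam 2])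
    have hsq := sq_sqrt hpos.le
    set β := √(Qf s * (1 - lam 0))
    refine ⟨_, _, isCertificate_cornerWeights (β := β) (w := β / Qf s) hs hlam hsum
      (sqrt_pos.2 hpos) (sqrt_le_iff.2 ⟨by norm_num, by linarith⟩) (by field_simp) ?_⟩
    field_simp
    linarith

lemma exists_isCertificate (hs : 15 ≤ s) (hlam : ∀ i, 0 < lam i) (hsum : ∑ i, lam i = 1) :
    ∃ b c, IsCertificate s lam b c := by
  rcases le_or_gt (fourierNormSq lam) (3 / 4) with hR | hR
  · exact exists_isCertificate_of_fourierNormSq_le hs hlam hsum hR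
  · obtain ⟨i, hi⟩ := exists_five_sixths_lt_of_lt_fourierNormSq ⟨fun i ↦ (hlam i).le, hsum⟩ hR
    let σ : Equiv.Perm (Fin 3) := Equiv.swap 0 i
    obtain ⟨b, c, hbc⟩ := exists_isCertificate_of_five_sixths_le (lam := lam ∘ σ) hs
      (fun j ↦ hlam (σ j)) ((Equiv.sum_comp σ lam).trans hsum) (by simpa [σ] using hi.le)
    have hinvolutive : (lam ∘ σ) ∘ σ = lam := by
      ext j
      simp [σ]
    exact ⟨b ∘ σ, c ∘ σ, hinvolutive ▸ hbc.comp_perm σ⟩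

end Certificates

section Psi

variable {s : ℝ} {lam b c : Fin 3 → ℝ}

lemma exp_freeEnergy (hs : 0 < s) (hlam : ∀ i, 0 < lam i) (hb : ∀ i, 0 < b i)
    (hc : ∀ i, 0 < c i) :
    exp (freeEnergy s lam b c) = (∑ i, q (s * b i) / q s) / 3 *
      (∏ i, (lam i / (b i * c i)) ^ lam i) ^ Qf s * (1 + 2 * fourierNormSq c ^ (Qf s / 2)) := by
  have hz (i : Fin 3) : 0 < lam i / (b i * c i) := div_pos (hlam i) (mul_pos (hb i) (hc i))
  have hmass : 0 < ∑ i, q (s * b i) / q s :=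
    Finset.sum_pos (fun i _ ↦ div_pos (q_pos (mul_pos hs (hb i))) (q_pos hs)) Finset.univ_nonempty
  have hR0 := rpow_nonneg (fourierNormSq_nonneg c) (Qf s / 2)
  rw [freeEnergy, exp_add, exp_add, exp_log (by positivity), exp_log (by positivity),
    prod_rpow_eq_exp_sum_mul_log hz, ← exp_mul, mul_comm (Qf s)]

lemma Psi_le_sum_mul_prod_rpow_mul {k : ℕ} {γ : ℝ} (hγ : γ ∈ Set.Icc 0 1) (hs : 0 < s)
    (hQs : Qf s = k * γ) (hlam : ∀ i, 0 ≤ lam i) (hb : ∀ i, 0 < b i)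
    (hc : c ∈ stdSimplex ℝ (Fin 3)) {ω : Fin 3 → ℝ} (hω : ω ∈ stdSimplex ℝ (Fin 3)) :
    Psi k γ s ω lam (fun i ↦ s * b i) c ≤
      (∑ i, q (s * b i) / q s) * (∏ i, (lam i / (b i * c i)) ^ lam i) ^ Qf s *
        ((1 + 2 * fourierNormSq c ^ (Qf s / 2)) / 3) ^ γ := by
  have hPsi : Psi k γ s ω lam (fun i ↦ s * b i) c =
      (∏ i, (q (s * b i) / q s / ω i) ^ ω i) * (∏ i, (lam i / (b i * c i)) ^ lam i) ^ Qf s *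
        r k (c 0) (c 1) (c 2) ^ γ := by
    simp only [Psi, hQs, div_div, mul_comm (q s), mul_assoc s, mul_comm _ s,
      mul_div_mul_left _ _ hs.ne']
  have hq (i : Fin 3) : 0 ≤ q (s * b i) / q s :=
    (div_pos (q_pos (mul_pos hs (hb i))) (q_pos hs)).le
  have hentropy : 0 ≤ (∏ i, (lam i / (b i * c i)) ^ lam i) ^ Qf s :=
    rpow_nonneg (Finset.prod_nonneg fun i _ ↦
      rpow_nonneg (div_nonneg (hlam i) (mul_nonneg (hb i).le (hc.1 i))) _) _
  have hr := r_le_of_mem_stdSimplex (k := k) hc (hs.le.trans (le_Qf hs))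
    (by rw [hQs]; exact mul_le_of_le_one_right k.cast_nonneg hγ.2)
  rw [hPsi]
  gcongr ?_ * _ * ?_
  · exact rpow_nonneg (r_nonneg k hc.1) _
  · exact mul_nonneg (Finset.sum_nonneg fun i _ ↦ hq i) hentropy
  · exact prod_div_rpow_le_sum hω hq
  · exact rpow_le_rpow (r_nonneg k hc.1) hr hγ.1

lemma Psi_le_of_isCertificate {k : ℕ} {γ : ℝ} (hγ : γ ∈ Set.Icc 0 1) (hs : 0 < s)
    (hQs : Qf s = k * γ) (hlam : ∀ i, 0 < lam i) (h : IsCertificate s lam b c) {ω : Fin 3 → ℝ}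
    (hω : ω ∈ stdSimplex ℝ (Fin 3)) :
    Psi k γ s ω lam (fun i ↦ s * b i) c ≤
      3 ^ (1 - γ) * (1 + 2 * fourierNormSq c ^ (Qf s / 2)) ^ (γ - 1) := by
  refine (Psi_le_sum_mul_prod_rpow_mul hγ hs hQs (fun i ↦ (hlam i).le) h.pos_left
    ⟨fun i ↦ (h.pos_right i).le, h.sum_eq_one⟩ hω).trans ?_
  have hexp := exp_freeEnergy hs hlam h.pos_left h.pos_right
  have hR0 := rpow_nonneg (fourierNormSq_nonneg c) (Qf s / 2)
  set V := 1 + 2 * fourierNormSq c ^ (Qf s / 2)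
  have hV : 0 < V := by positivity
  calc _ = exp (freeEnergy s lam b c) * (3 ^ (1 - γ) * V ^ (γ - 1)) := by
        rw [hexp, div_rpow hV.le zero_le_three, rpow_sub zero_lt_three, rpow_sub hV, rpow_one,
          rpow_one]
        field_simp
    _ ≤ 3 ^ (1 - γ) * V ^ (γ - 1) :=
      mul_le_of_le_one_left (by positivity) (exp_le_one_iff.2 h.freeEnergy_nonpos)

lemma exists_Psi_le {k : ℕ} {γ : ℝ} (hγ : γ ∈ Set.Icc 0 1) (hs : 15 ≤ s) (hQs : Qf s = k * γ)
    (hlam : ∀ i, 0 < lam i) (hsum : ∑ i, lam i = 1) {m : ℝ} (hm0 : 0 ≤ m)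
    (hm : m ≤ min (fourierNormSq lam) (1 / 2)) :
    ∃ a c : Fin 3 → ℝ, (∀ i, 0 < a i) ∧ (∀ i, 0 < c i) ∧ ∀ ω ∈ stdSimplex ℝ (Fin 3),
      Psi k γ s ω lam a c ≤ 3 ^ (1 - γ) * (1 + 2 * m ^ (Qf s / 2)) ^ (γ - 1) := by
  have hs0 : 0 < s := by linarith
  have hd : 0 ≤ Qf s := hs0.le.trans (le_Qf hs0)
  obtain ⟨b, c, h⟩ := exists_isCertificate hs hlam hsum
  refine ⟨fun i ↦ s * b i, c, fun i ↦ mul_pos hs0 (h.pos_left i), h.pos_right, fun ω hω ↦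
    (Psi_le_of_isCertificate hγ hs0 hQs hlam h hω).trans ?_⟩
  gcongr 3 ^ (1 - γ) * ?_
  refine rpow_le_rpow_of_nonpos (by positivity) ?_ (by linarith [hγ.2])
  gcongr
  exact hm.trans h.fourierNormSq_le

lemma sq_le_fourierNormSq {ε : ℝ} {y : Fin 3 → ℝ} (hy : ∑ i, y i = 1) (hε : 0 ≤ ε)
    (h : ε ≤ max |y 1 - 1 / 3| |y 2 - 1 / 3|) : ε ^ 2 ≤ fourierNormSq y := by
  have hcoord (i : Fin 3) (hi : ε ≤ |y i - 1 / 3|) : ε ^ 2 ≤ fourierNormSq y := by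
    have hsingle : (y i - 1 / 3) ^ 2 ≤ ∑ j, (y j - 1 / 3) ^ 2 :=
      Finset.single_le_sum (f := fun j ↦ (y j - 1 / 3) ^ 2) (fun j _ ↦ sq_nonneg _)
        (Finset.mem_univ i)
    rw [fourierNormSq_eq_sum_sq_sub hy]
    nlinarith [sq_le_sq' (by linarith) hi, sq_abs (y i - 1 / 3), sq_nonneg (y i - 1 / 3)]
  exact (le_max_iff.1 h).elim (hcoord 1) (hcoord 2)

end Psi

theorem stmt11 (k : ℕ) (hk : 3 ≤ k) (γ : ℝ) (hγ : γ ∈ Set.Ioo (0:ℝ) 1)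
    (hkγ : 2 < (k:ℝ) * γ) (s : ℝ) (hs : 0 < s) (hQs : Qf s = (k:ℝ) * γ)
    (hs15 : 15 ≤ s) :
    (∀ lam : Fin 3 → ℝ, (∀ i, 0 < lam i) → lam 0 + lam 1 + lam 2 = 1 →
      ∃ a c : Fin 3 → ℝ, (∀ i, 0 < a i) ∧ (∀ i, 0 < c i) ∧
        ∀ ω : Fin 3 → ℝ, (∀ i, 0 ≤ ω i) → ω 0 + ω 1 + ω 2 = 1 →
          Psi k γ s ω lam a c ≤ (3:ℝ) ^ (1 - γ)) ∧
    (∀ ε : ℝ, 0 < ε → ∃ δ : ℝ, 0 < δ ∧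
      ∀ lam : Fin 3 → ℝ, (∀ i, 0 < lam i) → lam 0 + lam 1 + lam 2 = 1 →
        ε ≤ max |lam 1 - 1/3| |lam 2 - 1/3| →
        ∃ a c : Fin 3 → ℝ, (∀ i, 0 < a i) ∧ (∀ i, 0 < c i) ∧
          ∀ ω : Fin 3 → ℝ, (∀ i, 0 ≤ ω i) → ω 0 + ω 1 + ω 2 = 1 →
            Psi k γ s ω lam a c ≤ (3:ℝ) ^ (1 - γ) - δ) := by
  have hd : 0 < Qf s := hs.trans_le (le_Qf hs)
  have hγ' : γ ∈ Set.Icc 0 1 := Set.Ioo_subset_Icc_self hγ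
  refine ⟨fun lam hlam hsum ↦ ?_, fun ε hε ↦ ?_⟩
  · rw [← Fin.sum_univ_three] at hsum
    obtain ⟨a, c, ha, hc, hPsi⟩ := exists_Psi_le hγ' hs15 hQs hlam hsum le_rfl
      (le_min (fourierNormSq_nonneg lam) (by norm_num))
    refine ⟨a, c, ha, hc, fun ω hω hωsum ↦ ?_⟩
    rw [← Fin.sum_univ_three] at hωsum
    simpa [hd.ne'] using hPsi ω ⟨hω, hωsum⟩
  · have hm : 0 < min (ε ^ 2) (1 / 2) := lt_min (by positivity) (by norm_num)
    have hgain : (1 + 2 * min (ε ^ 2) (1 / 2) ^ (Qf s / 2)) ^ (γ - 1) < 1 :=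
      rpow_lt_one_of_one_lt_of_neg (lt_add_of_pos_right 1 (by positivity)) (sub_neg.2 hγ.2)
    refine ⟨3 ^ (1 - γ) * (1 - _), mul_pos (by positivity) (sub_pos.2 hgain),
      fun lam hlam hsum hfar ↦ ?_⟩
    rw [← Fin.sum_univ_three] at hsum
    obtain ⟨a, c, ha, hc, hPsi⟩ := exists_Psi_le hγ' hs15 hQs hlam hsum hm.le
      (min_le_min_right _ (sq_le_fourierNormSq hsum hε.le hfar))
    refine ⟨a, c, ha, hc, fun ω hω hωsum ↦ ?_⟩
    rw [← Fin.sum_univ_three] at hωsum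
    linarith [hPsi ω ⟨hω, hωsum⟩]
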